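/- (Consequence of the main result.) In a Saccheri quadrilateral A B Γ Δ with base ΔΓ (right angles at Δ and Γ, equal legs dist A Δ = dist B Γ, with A and B strictly on the same side of the line through Δ and Γ), the summit equals the base: dist A B = dist Δ Γ. -/

import Mathlib

open EuclideanGeometry Real RealInnerProductSpace

/-!
Modulo the direction of the base line, the vector from a point of that line to `A` does not depend
on the chosen point. So being on the same side of the base means that the perpendiculars `A -ᵥ Δ`
and `B -ᵥ Γ` point the same way; having equal lengths they are equal, hence `A B Γ Δ` is a
parallelogram and its opposite sides `AB` and `ΔΓ` have equal length.
-/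

theorem mkQ_direction_vsub_eq {R V P : Type*} [Ring R] [AddCommGroup V] [Module R V]
    [AddTorsor V P] {s : AffineSubspace R P} {p p' : P} (hp : p ∈ s) (hp' : p' ∈ s) (x : P) :
    s.direction.mkQ (x -ᵥ p) = s.direction.mkQ (x -ᵥ p') := by
  have hdiff : (x -ᵥ p) - (x -ᵥ p') ∈ s.direction := by
    rw [vsub_sub_vsub_cancel_left]
    exact s.vsub_mem_direction hp' hp
  exact (Submodule.Quotient.eq _).2 hdiff

section SameSide

variable {R V P : Type*} [CommRing R] [PartialOrder R] [IsStrictOrderedRing R] [AddCommGroup V]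
  [Module R V] [AddTorsor V P]

theorem sameRay_map_iff_of_disjoint_ker {W : Type*} [AddCommGroup W] [Module R W] {f : V →ₗ[R] W}
    {L : Submodule R V} (hL : Disjoint L f.ker) {v w : V} (hv : v ∈ L) (hw : w ∈ L) :
    SameRay R (f v) (f w) ↔ SameRay R v w := by
  have hf : Function.Injective (f.domRestrict L) :=
    Set.injOn_iff_injective.1 (LinearMap.injOn_of_disjoint_ker le_rfl hL)
  have hrestrict : SameRay R (f v) (f w) ↔ SameRay R (⟨v, hv⟩ : L) ⟨w, hw⟩ :=
    hf.sameRay_map_iff (x := ⟨v, hv⟩) (y := ⟨w, hw⟩)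
  exact hrestrict.trans L.injective_subtype.sameRay_map_iff.symm

theorem sameRay_vsub_of_wSameSide {s : AffineSubspace R P} {L : Submodule R V}
    (hL : Disjoint L s.direction) {x y p q : P} (hxy : s.WSameSide x y) (hp : p ∈ s) (hq : q ∈ s)
    (hxp : x -ᵥ p ∈ L) (hyq : y -ᵥ q ∈ L) : SameRay R (x -ᵥ p) (y -ᵥ q) := by
  obtain ⟨p', hp', q', hq', hray⟩ := hxy
  rw [← s.direction.ker_mkQ] at hL
  rw [← sameRay_map_iff_of_disjoint_ker hL hxp hyq, mkQ_direction_vsub_eq hp hp',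
    mkQ_direction_vsub_eq hq hq']
  exact hray.map s.direction.mkQ

end SameSide

theorem dist_eq_dist_of_vsub_eq_vsub {V P : Type*} [SeminormedAddCommGroup V]
    [PseudoMetricSpace P] [NormedAddTorsor V P] {x y p q : P} (h : x -ᵥ p = y -ᵥ q) :
    dist x y = dist p q := by
  calc
    dist x y = dist ((x -ᵥ p) +ᵥ p) ((y -ᵥ q) +ᵥ q) := by rw [vsub_vadd, vsub_vadd]
    _ = dist p q := by rw [h, dist_vadd_cancel_left]

section InnerProduct

variable {V P : Type*} [NormedAddCommGroup V] [InnerProductSpace ℝ V] [MetricSpace P]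
  [NormedAddTorsor V P]

theorem vsub_mem_orthogonal_direction_line_iff_angle_eq_pi_div_two {x p q : P} :
    x -ᵥ p ∈ line[ℝ, p, q].directionᗮ ↔ ∠ x p q = π / 2 := by
  rw [direction_affineSpan, vectorSpan_pair_rev, Submodule.mem_orthogonal_singleton_iff_inner_left]
  exact InnerProductGeometry.inner_eq_zero_iff_angle_eq_pi_div_two _ _

theorem vsub_eq_vsub_of_wSameSide_of_dist_eq {s : AffineSubspace ℝ P} {x y p q : P}
    (hxy : s.WSameSide x y) (hp : p ∈ s) (hq : q ∈ s) (hxp : x -ᵥ p ∈ s.directionᗮ)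
    (hyq : y -ᵥ q ∈ s.directionᗮ) (hdist : dist x p = dist y q) : x -ᵥ p = y -ᵥ q := by
  have hray : SameRay ℝ (x -ᵥ p) (y -ᵥ q) :=
    sameRay_vsub_of_wSameSide s.direction.orthogonal_disjoint.symm hxy hp hq hxp hyq
  rw [dist_eq_norm_vsub V, dist_eq_norm_vsub V] at hdist
  exact (sameRay_iff_of_norm_eq hdist).1 hray

theorem stmt17_general {A B Γ Δ : P} (hAd : ∠ A Δ Γ = π / 2) (hBg : ∠ B Γ Δ = π / 2)
    (hleg : dist A Δ = dist B Γ) (hside : line[ℝ, Δ, Γ].WSameSide A B) :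
    dist A B = dist Δ Γ := by
  have hAperp : A -ᵥ Δ ∈ line[ℝ, Δ, Γ].directionᗮ :=
    vsub_mem_orthogonal_direction_line_iff_angle_eq_pi_div_two.2 hAd
  have hBperp : B -ᵥ Γ ∈ line[ℝ, Δ, Γ].directionᗮ := by
    rw [Set.pair_comm]
    exact vsub_mem_orthogonal_direction_line_iff_angle_eq_pi_div_two.2 hBg
  have hparallelogram : A -ᵥ Δ = B -ᵥ Γ :=
    vsub_eq_vsub_of_wSameSide_of_dist_eq hside (left_mem_affineSpan_pair ℝ Δ Γ)
      (right_mem_affineSpan_pair ℝ Δ Γ) hAperp hBperp hleg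
  exact dist_eq_dist_of_vsub_eq_vsub hparallelogram

end InnerProduct

theorem stmt17 (A B Γ Δ : EuclideanSpace ℝ (Fin 2))
    (hne : Δ ≠ Γ)
    (hAd : ∠ A Δ Γ = π / 2)
    (hBg : ∠ B Γ Δ = π / 2)
    (hleg : dist A Δ = dist B Γ)
    (hside : AffineSubspace.SSameSide line[ℝ, Δ, Γ] A B) :
    dist A B = dist Δ Γ :=
  stmt17_general hAd hBg hleg hside.wSameSide
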